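/- arXiv:2401.15512 — 3 statements merged into one kernel-verified Lean document; each statement's English description precedes it below -/
import Mathlib

section
/- Let f be a higher energy function, strictly positive on (a,b), where a is a zero of f or a = −∞ and b is the next zero of f to the right or b = +∞. Then there is a constant C < ∞, depending only on f, a, and b, such that |g_h''(x)| ≤ C for every differentiable 1-Lipschitz function h : ℝ → ℝ and every x ∈ (a,b). -/
/-!
The higher energy function is `f = q² e^{-t²/2}` for a nonzero real polynomial `q` (a multiple of
a Hermite polynomial), and nothing else about Hermite polynomials is needed. Write `s = f'/f` for
the score, `e = E_P[h]`, and let `F(x)` be the integral of `f (h - e)` over the part of `S` to the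
left of `x`, so that `g = F / f`. Then `g' = h - e - s g`, and differentiating once more gives
`g'' = h' - s (h - e) + (s² - s') F / f` on `S` (`deriv_deriv_steinG`).

Freezing `h` at `x` writes `F(x) = (h(x) - e) A(x) + R(x)`, where `A(x)` is the mass of `f` to the
left of `x` and `|R(x)| ≤ B(x)`, the integral of `f(t) (x - t)` over the same set, because `h` is
1-Lipschitz. Since moreover `|h'| ≤ 1` and `|h(x) - e| ≤ |x| + m` with `m = E_P|X|`
(`abs_centered_le`), it is enough to bound, near the left end `a`,

* `(1 + |x|) |K(x)|`, where `K = -s + (s² - s') A / f`, and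
* `|s² - s'| B / f`,

neither of which involves `h`. As the integral of `f (h - e)` over all of `S` vanishes, `F` is also
minus the integral to the right of `x`, so near `b` the same quantities with the right-hand mass and
moment serve; they are the left-hand ones for the reflected polynomial `q(-X)` (`right_bounds`).

Let `δ` be `x - a` near a finite end `a`, and `1/|x|` near `-∞`. In both cases `s` is of order
`1/δ`, `s² - s'` of order `1/δ²`, and `B / f` of order `δ²`; the point is that the leading terms
of `K` cancel.

* At a zero `a` of `q` of order `n` (`left_bounds_zero`), put `N = 2n`: then `s = N/δ + O(1)`,
  `s² - s' = N(N+1)/δ² + O(1/δ)` and `A / f = δ/(N+1) + O(δ²)`, so `K` is bounded.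
* At `-∞` (`left_bounds_infinity`), `A = f/s + O(f/|x|³)`, so `K = -s'/s + O(1/|x|) = O(1/|x|)`.

On compact subintervals of `S` everything is continuous (`left_bounds_compact`).
-/

open MeasureTheory Filter Set

noncomputable section

/-- The probabilists' Hermite polynomial `p_l(x) = (-1)^l e^{x^2/2} (d/dx)^l e^{-x^2/2}`
as a real function. -/
def hermiteFun (l : ℕ) (x : ℝ) : ℝ :=
  (-1 : ℝ) ^ l * Real.exp (x ^ 2 / 2) *
    iteratedDeriv l (fun t => Real.exp (-t ^ 2 / 2)) x

/-- The higher energy function of order `l` with normalizing constant `c`. -/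
def heFun (l : ℕ) (c : ℝ) (x : ℝ) : ℝ :=
  c * hermiteFun l x ^ 2 * Real.exp (-x ^ 2 / 2)

/-- `c` is the constant making `heFun l c` a probability density on `ℝ`. -/
def IsNormalizing (l : ℕ) (c : ℝ) : Prop :=
  0 < c ∧ (∫ x : ℝ, heFun l c x) = 1

/-- `(x n)_{n=1}^N` is an MIW sequence of `f` : strictly increasing, avoiding the
zeros of `f`, and satisfying the MIW recursion for `1 < n < N`. -/
def IsMIW (f : ℝ → ℝ) (N : ℕ) (x : ℕ → ℝ) : Prop :=
  (∀ n, 1 ≤ n → n < N → x n < x (n + 1)) ∧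
  (∀ n, 1 ≤ n → n ≤ N → f (x n) ≠ 0) ∧
  (∀ n, 1 < n → n < N →
    1 / (x (n + 1) - x n) - 1 / (x n - x (n - 1)) = deriv f (x n) / f (x n))

/-- Left boundary condition at `x_0 = -∞`. -/
def LeftBC (f : ℝ → ℝ) (x : ℕ → ℝ) : Prop :=
  1 / (x 2 - x 1) = deriv f (x 1) / f (x 1)

/-- Right boundary condition at `x_{N+1} = +∞`. -/
def RightBC (f : ℝ → ℝ) (N : ℕ) (x : ℕ → ℝ) : Prop :=
  -(1 / (x N - x (N - 1))) = deriv f (x N) / f (x N)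

/-- Right boundary condition at a point (`none` denoting `+∞`). -/
def RightBCAt (f : ℝ → ℝ) (N : ℕ) (x : ℕ → ℝ) : Option ℝ → Prop
  | none => -(1 / (x N - x (N - 1))) = deriv f (x N) / f (x N)
  | some b => x N < b ∧
      1 / (b - x N) - 1 / (x N - x (N - 1)) = deriv f (x N) / f (x N)

/-- `r 1 < ⋯ < r l` enumerates the zeros of `f`. -/
def ZeroEnum (f : ℝ → ℝ) (l : ℕ) (r : ℕ → ℝ) : Prop :=
  (∀ i j, 1 ≤ i → i < j → j ≤ l → r i < r j) ∧
  {y : ℝ | f y = 0} = r '' Set.Icc 1 l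

/-- Membership in the region `R_k = (r_k, r_{k+1})`, with the conventions
`r_0 = -∞` and `r_{l+1} = +∞`. -/
def InRegion (l : ℕ) (r : ℕ → ℝ) (k : ℕ) (t : ℝ) : Prop :=
  (k = 0 ∨ r k < t) ∧ (k = l ∨ t < r (k + 1))

/-- The region `R_k` as a subset of `ℝ`. -/
def regionSet (l : ℕ) (r : ℕ → ℝ) (k : ℕ) : Set ℝ := {t | InRegion l r k t}

/-- The number of points of `(x n)_{n=1}^N` lying in region `R_k`. -/
def regionCount (l : ℕ) (r : ℕ → ℝ) (N : ℕ) (x : ℕ → ℝ) (k : ℕ) : ℕ :=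
  Set.ncard {n : ℕ | n ∈ Set.Icc 1 N ∧ InRegion l r k (x n)}

/-- `n(t) = max {0 ≤ k ≤ N : x_k ≤ t}` (convention `x_0 = -∞`); for an increasing
sequence this is the number of points among `x_1, …, x_N` that are `≤ t`. -/
def nIdx (N : ℕ) (x : ℕ → ℝ) (t : ℝ) : ℕ :=
  Set.ncard {n : ℕ | n ∈ Set.Icc 1 N ∧ x n ≤ t}

/-- `1/(x_{n+1}-x_n) - 1/(x_n-x_{n-1})`, with the conventions `x_0 = -∞`,
`x_{N+1} = +∞` (so the corresponding reciprocals vanish). -/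
def gapTerm (N : ℕ) (x : ℕ → ℝ) (n : ℕ) : ℝ :=
  (if n < N then 1 / (x (n + 1) - x n) else 0) -
    (if 1 < n then 1 / (x n - x (n - 1)) else 0)

/-- The MIW energy `H(x_1,…,x_N)`. -/
def Hfun (N : ℕ) (x : ℕ → ℝ) : ℝ :=
  ∑ n ∈ Finset.Icc 1 N, x n ^ 2 + ∑ n ∈ Finset.Icc 1 N, gapTerm N x n ^ 2

/-- Partial derivative `∂H/∂x_n` evaluated at the configuration `x`. -/
def partialH (N : ℕ) (x : ℕ → ℝ) (n : ℕ) : ℝ :=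
  deriv (fun s => Hfun N (Function.update x n s)) (x n)

/-- The empirical distribution `(1/N) ∑_{n=1}^N δ_{x_n}`. -/
def empDist (N : ℕ) (x : ℕ → ℝ) : Measure ℝ :=
  (N : ENNReal)⁻¹ • ∑ n ∈ Finset.Icc 1 N, Measure.dirac (x n)

/-- The probability measure on `S` with density proportional to `f`. -/
def densMeasure (f : ℝ → ℝ) (S : Set ℝ) : Measure ℝ :=
  (volume.restrict S).withDensity fun t => ENNReal.ofReal (f t / ∫ u in S, f u)

/-- The Stein solution `g_h(x) = (1/f(x)) ∫_a^x f(t)(h(t) - E_P[h]) dt`, where the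
integral runs over the part of `S` to the left of `x`. -/
def steinG (f : ℝ → ℝ) (S : Set ℝ) (h : ℝ → ℝ) (x : ℝ) : ℝ :=
  (1 / f x) * ∫ t in S ∩ Set.Iio x, f t * (h t - ∫ s, h s ∂(densMeasure f S))

/-- The intermediate density `ρ(t) = 1/((N-1)(x_{n(t)+1} - x_{n(t)}))` on `(x_1, x_N)`. -/
def interDens (N : ℕ) (x : ℕ → ℝ) (t : ℝ) : ℝ :=
  Set.indicator (Set.Ioo (x 1) (x N))
    (fun u => 1 / (((N : ℝ) - 1) * (x (nIdx N x u + 1) - x (nIdx N x u)))) t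

/-- The intermediate distribution `R` with density `ρ`. -/
def interDist (N : ℕ) (x : ℕ → ℝ) : Measure ℝ :=
  volume.withDensity fun t => ENNReal.ofReal (interDens N x t)


/-! ### Polynomial multiples of the Gaussian -/

/-- The unnormalized density `q(t)² e^{-t²/2}`; the normalizing constant of a higher energy
function is absorbed into `q` as its square root. -/
def gau (q : Polynomial ℝ) (t : ℝ) : ℝ := q.eval t ^ 2 * Real.exp (-t ^ 2 / 2)

/-- The score `(log gau q)' = 2 q'/q - t`; it has this meaning only where `q t ≠ 0`. -/
def score (q : Polynomial ℝ) (t : ℝ) : ℝ := 2 * q.derivative.eval t / q.eval t - t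

/-- The derivative of `score q`, in closed form; it has this meaning only where `q t ≠ 0`. -/
def dscore (q : Polynomial ℝ) (t : ℝ) : ℝ :=
  2 * (q.derivative.derivative.eval t * q.eval t - q.derivative.eval t ^ 2) / q.eval t ^ 2 - 1

lemma gau_nonneg (q : Polynomial ℝ) (t : ℝ) : 0 ≤ gau q t := by
  unfold gau; positivity

lemma gau_pos {q : Polynomial ℝ} {t : ℝ} (h : q.eval t ≠ 0) : 0 < gau q t := by
  unfold gau; positivity

lemma gau_continuous (q : Polynomial ℝ) : Continuous (gau q) := by
  unfold gau; fun_prop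

lemma hasDerivAt_gauss (t : ℝ) :
    HasDerivAt (fun t : ℝ => Real.exp (-t ^ 2 / 2)) (-t * Real.exp (-t ^ 2 / 2)) t := by
  have h : HasDerivAt (fun t : ℝ => -t ^ 2 / 2) (-t) t := by
    have := ((hasDerivAt_pow 2 t).neg.div_const 2)
    refine this.congr_deriv ?_
    simp
    ring
  convert h.exp using 1
  ring

/-- The derivative of `gau q` in a form that is valid also at the zeros of `q`. -/
lemma gau_hasDerivAt' (q : Polynomial ℝ) (t : ℝ) :
    HasDerivAt (gau q)
      ((2 * q.derivative * q - Polynomial.X * q ^ 2).eval t * Real.exp (-t ^ 2 / 2)) t := by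
  have h := ((q.hasDerivAt t).pow 2).mul (hasDerivAt_gauss t)
  refine h.congr_deriv ?_
  simp
  ring

lemma gau_hasDerivAt {q : Polynomial ℝ} {t : ℝ} (h : q.eval t ≠ 0) :
    HasDerivAt (gau q) (score q t * gau q t) t := by
  convert gau_hasDerivAt' q t using 1
  simp [score, gau]
  field_simp

lemma score_hasDerivAt {q : Polynomial ℝ} {t : ℝ} (h : q.eval t ≠ 0) :
    HasDerivAt (score q) (dscore q t) t := by
  have := (((q.derivative.hasDerivAt t).const_mul 2).div (q.hasDerivAt t) h).sub (hasDerivAt_id t)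
  refine this.congr_deriv ?_
  simp [dscore]
  ring

lemma integrable_poly_gauss (p : Polynomial ℝ) :
    Integrable (fun t : ℝ => p.eval t * Real.exp (-t ^ 2 / 2)) := by
  induction p using Polynomial.induction_on' with
  | add p q hp hq => 
    refine (hp.add hq).congr (ae_of_all _ fun t => ?_)
    simp [add_mul]
  | monomial n r =>
    have := (integrable_rpow_mul_exp_neg_mul_sq (b := 1 / 2) (by norm_num)
      (s := n) (by have : (0 : ℝ) ≤ n := n.cast_nonneg
                   linarith)).const_mul r
    refine this.congr (ae_of_all _ fun t => ?_)
    simp only [Polynomial.eval_monomial, Real.rpow_natCast]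
    rw [show -t ^ 2 / 2 = -(1 / 2) * t ^ 2 by ring]
    ring

lemma gau_integrable (q : Polynomial ℝ) : Integrable (gau q) := by
  refine (integrable_poly_gauss (q ^ 2)).congr (ae_of_all _ fun t => ?_)
  simp [gau]

lemma gau_mul_id_integrable (q : Polynomial ℝ) : Integrable (fun t => gau q t * t) := by
  refine (integrable_poly_gauss (q ^ 2 * Polynomial.X)).congr (ae_of_all _ fun t => ?_)
  simp [gau]; ring

/-- The mass `A(x)` that `gau q` gives to the part of `S` to the left of `x`. -/
def massLeft (q : Polynomial ℝ) (S : Set ℝ) (x : ℝ) : ℝ := ∫ t in S ∩ Iio x, gau q t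

/-- The moment `B(x)`, the integral of `gau q t * (x - t)` over the part of `S` to the left
of `x`. -/
def momentLeft (q : Polynomial ℝ) (S : Set ℝ) (x : ℝ) : ℝ :=
  ∫ t in S ∩ Iio x, gau q t * (x - t)

lemma gau_mul_sub_integrable (q : Polynomial ℝ) (x : ℝ) :
    Integrable (fun t => gau q t * (x - t)) := by
  refine (((gau_integrable q).mul_const x).sub (gau_mul_id_integrable q)).congr
    (ae_of_all _ fun t => ?_)
  simp [mul_sub]

/-- The coefficient `K(x)` of `h(x) - E_P[h]` in the second derivative of the Stein solution. -/
def leftKernel (q : Polynomial ℝ) (S : Set ℝ) (x : ℝ) : ℝ :=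
  -score q x + (score q x ^ 2 - dscore q x) * (massLeft q S x / gau q x)

/-- A bound for the part of the second derivative of the Stein solution that comes from
replacing `h(t)` by `h(x)` to the left of `x`. -/
def leftRemainder (q : Polynomial ℝ) (S : Set ℝ) (x : ℝ) : ℝ :=
  |score q x ^ 2 - dscore q x| * (momentLeft q S x / gau q x)

/-! ### The end at minus infinity -/

lemma tendsto_eval_div_atBot {p q : Polynomial ℝ} (h : p.degree < q.degree) :
    Tendsto (fun x => p.eval x / q.eval x) atBot (nhds 0) := by
  have := (Polynomial.div_tendsto_atTop_zero_of_degree_lt (p.comp (-Polynomial.X))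
    (q.comp (-Polynomial.X)) (by simpa using h)).comp tendsto_neg_atBot_atTop
  refine this.congr fun x => ?_
  simp

/-- Near `-∞`, `score q x` behaves like `-x` and its derivative stays bounded. -/
lemma score_eventually (q : Polynomial ℝ) (hq : q ≠ 0) :
    ∀ᶠ x in atBot, q.eval x ≠ 0 ∧ -x / 2 ≤ score q x ∧ score q x ≤ -2 * x ∧ |dscore q x| ≤ 2 := by
  have h1 := tendsto_eval_div_atBot (Polynomial.degree_derivative_lt hq)
  have h2 : Tendsto (fun x => q.derivative.derivative.eval x / q.eval x) atBot (nhds 0) := by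
    apply tendsto_eval_div_atBot
    exact lt_of_le_of_lt (Polynomial.degree_derivative_le) (Polynomial.degree_derivative_lt hq)
  have h3 := Polynomial.eventually_atBot_not_isRoot q hq
  have h4 := h1.eventually (Metric.ball_mem_nhds 0 (show (0:ℝ) < 1 / 2 by norm_num))
  have h5 := h2.eventually (Metric.ball_mem_nhds 0 (show (0:ℝ) < 1 / 8 by norm_num))
  filter_upwards [h3, h4, h5, eventually_lt_atBot (-4)] with x hx h4 h5 h6
  simp only [Real.dist_eq, sub_zero, abs_lt] at h4 h5
  have es : score q x = 2 * (q.derivative.eval x / q.eval x) - x := by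
    unfold score; ring
  have ed : dscore q x = 2 * (q.derivative.derivative.eval x / q.eval x)
      - 2 * (q.derivative.eval x / q.eval x) ^ 2 - 1 := by
    unfold dscore; field_simp
  refine ⟨hx, by rw [es]; linarith, by rw [es]; linarith, ?_⟩
  rw [ed, abs_le]
  constructor <;> nlinarith

lemma poly_gauss_hasDerivAt (p : Polynomial ℝ) (t : ℝ) :
    HasDerivAt (fun t => p.eval t * Real.exp (-t ^ 2 / 2))
      ((p.derivative - Polynomial.X * p).eval t * Real.exp (-t ^ 2 / 2)) t := by
  refine ((p.hasDerivAt t).mul (hasDerivAt_gauss t)).congr_deriv ?_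
  simp
  ring

lemma tendsto_poly_gauss (p : Polynomial ℝ) :
    Tendsto (fun t => p.eval t * Real.exp (-t ^ 2 / 2)) atBot (nhds 0) :=
  tendsto_zero_of_hasDerivAt_of_integrableOn_Iic (a := 0)
    (fun t _ => poly_gauss_hasDerivAt p t)
    (integrable_poly_gauss _).integrableOn (integrable_poly_gauss _).integrableOn

lemma integral_Iic_poly_gauss (p : Polynomial ℝ) (x : ℝ) :
    ∫ t in Iic x, (p.derivative - Polynomial.X * p).eval t * Real.exp (-t ^ 2 / 2) =
      p.eval x * Real.exp (-x ^ 2 / 2) := by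
  rw [integral_Iic_of_hasDerivAt_of_tendsto
    (poly_gauss_hasDerivAt p x).continuousAt.continuousWithinAt
    (fun t _ => poly_gauss_hasDerivAt p t)
    (integrable_poly_gauss _).integrableOn (tendsto_poly_gauss p), sub_zero]

/-- The derivative of `gau q` is a polynomial times the Gaussian; this makes the boundary terms
of the integrations by parts in `tail_bounds` instances of `integral_Iic_poly_gauss`. -/
lemma score_mul_gau_eq {q : Polynomial ℝ} {t : ℝ} (h : q.eval t ≠ 0) :
    ((q ^ 2).derivative - Polynomial.X * q ^ 2).eval t * Real.exp (-t ^ 2 / 2) =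
      score q t * gau q t := by
  simp [score, gau, Polynomial.derivative_pow]
  field_simp

/-- Tail estimates at `-∞`: the moment is `O(f/x²)`, and the mass is `f/s` up to `O(f/|x|³)`.
They follow from `f ≤ (2/|x|) f'` on `(-∞, x]` and integration by parts. -/
lemma tail_bounds {q : Polynomial ℝ} {X x : ℝ} (hX : X ≤ -4)
    (hs : ∀ t ≤ X, q.eval t ≠ 0 ∧ -t / 2 ≤ score q t ∧ score q t ≤ -2 * t ∧ |dscore q t| ≤ 2)
    (hx : x ≤ X) :
    (∫ t in Iic x, gau q t * (x - t)) ≤ 4 * gau q x / x ^ 2 ∧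
    |(∫ t in Iic x, gau q t) - gau q x / score q x| ≤ 16 * gau q x / (-x) ^ 3 := by
  have hx0 : 0 < -x := by linarith
  have hxne : x ≠ 0 := by rintro rfl; simp at hx0
  have hgi := (gau_integrable q).integrableOn (s := Iic x)
  have hs1 : ∀ t ∈ Iic x, 2 ≤ score q t := fun t ht => by
    have ht' : t ≤ x := ht
    have := (hs t (by linarith)).2.1
    linarith
  have key : ∀ t ∈ Iic x, gau q t ≤ (2 / (-x)) * (score q t * gau q t) := fun t ht => by
    have ht' : t ≤ x := ht
    have h1 := (hs t (by linarith)).2.1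
    have h2 := gau_nonneg q t
    have h3 : 1 ≤ 2 / (-x) * score q t := by
      rw [div_mul_eq_mul_div, le_div_iff₀ hx0]; linarith
    nlinarith
  have e1 : EqOn (fun t => ((q ^ 2).derivative - Polynomial.X * q ^ 2).eval t *
      Real.exp (-t ^ 2 / 2)) (fun t => score q t * gau q t) (Iic x) := fun t ht =>
    score_mul_gau_eq (hs t (le_trans ht hx)).1
  have i1 : IntegrableOn (fun t => score q t * gau q t) (Iic x) :=
    (integrableOn_congr_fun e1 measurableSet_Iic).1 (integrable_poly_gauss _).integrableOn
  have v1 : ∫ t in Iic x, score q t * gau q t = gau q x := by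
    rw [← setIntegral_congr_fun measurableSet_Iic e1, integral_Iic_poly_gauss]
    simp [gau]
  have hA : ∫ t in Iic x, gau q t ≤ 2 / (-x) * gau q x := by
    rw [← v1, ← integral_const_mul]
    exact setIntegral_mono_on hgi (i1.const_mul _) measurableSet_Iic key
  have hA0 : 0 ≤ ∫ t in Iic x, gau q t :=
    setIntegral_nonneg measurableSet_Iic fun t _ => gau_nonneg q t
  -- integration by parts: the integral of `(x - t) f'` over `(-∞, x]` is the mass, as the boundary
  -- terms vanish
  have e2 : EqOn (fun t => (((Polynomial.C x - Polynomial.X) * q ^ 2).derivative -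
      Polynomial.X * ((Polynomial.C x - Polynomial.X) * q ^ 2)).eval t *
      Real.exp (-t ^ 2 / 2) + gau q t) (fun t => (x - t) * (score q t * gau q t)) (Iic x) :=
    fun t ht => by
      dsimp only
      rw [← score_mul_gau_eq (hs t (le_trans ht hx)).1]
      simp [gau]
      ring
  have i2 : IntegrableOn (fun t => (x - t) * (score q t * gau q t)) (Iic x) :=
    (integrableOn_congr_fun e2 measurableSet_Iic).1
      ((integrable_poly_gauss _).add (gau_integrable q)).integrableOn
  have v2 : ∫ t in Iic x, (x - t) * (score q t * gau q t) = ∫ t in Iic x, gau q t := by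
    rw [← setIntegral_congr_fun measurableSet_Iic e2,
      integral_add (integrable_poly_gauss _).integrableOn hgi, integral_Iic_poly_gauss]
    simp
  have hB : ∫ t in Iic x, gau q t * (x - t) ≤ 2 / (-x) * ∫ t in Iic x, gau q t := by
    rw [← v2, ← integral_const_mul]
    refine setIntegral_mono_on (gau_mul_sub_integrable q x).integrableOn (i2.const_mul _)
      measurableSet_Iic fun t ht => ?_
    have := mul_le_mul_of_nonneg_right (key t ht) (sub_nonneg.2 (show t ≤ x from ht))
    linarith
  have hgx := gau_nonneg q x
  have hx2 : 0 < x ^ 2 := by nlinarith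
  have h2x : 0 < 2 / (-x) := by positivity
  refine ⟨hB.trans ?_, ?_⟩
  · calc _ ≤ 2 / (-x) * (2 / (-x) * gau q x) := by gcongr
      _ = 4 * gau q x / x ^ 2 := by field_simp; ring
  -- the derivative of `f/s` is `f - f s'/s²`, so the error in the mass is the integral of
  -- `f s'/s²`
  have hne : ∀ t ∈ Iic x, score q t ≠ 0 := fun t ht => by have := hs1 t ht; positivity
  have d3 : ∀ t ∈ Iic x, HasDerivAt (fun t => gau q t / score q t)
      (gau q t - gau q t * dscore q t / score q t ^ 2) t := fun t ht => by
    have h0 := (hs t (le_trans ht hx)).1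
    refine ((gau_hasDerivAt h0).div (score_hasDerivAt h0) (hne t ht)).congr_deriv ?_
    have := hne t ht
    field_simp
  have b3 : ∀ t ∈ Iic x, |gau q t * dscore q t / score q t ^ 2| ≤ 8 / x ^ 2 * gau q t :=
    fun t ht => by
      have ht' : t ≤ x := ht
      obtain ⟨-, h1, -, h2⟩ := hs t (le_trans ht hx)
      have h3 := gau_nonneg q t
      rw [abs_div, abs_mul, abs_of_nonneg h3, abs_of_nonneg (sq_nonneg (score q t)),
        div_le_iff₀ (by have := hs1 t ht; positivity)]
      have h4 : x ^ 2 / 4 ≤ score q t ^ 2 := by nlinarith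
      calc gau q t * |dscore q t| ≤ gau q t * 2 := by gcongr
        _ = 8 / x ^ 2 * gau q t * (x ^ 2 / 4) := by field_simp; ring
        _ ≤ _ := by gcongr
  have i3 : IntegrableOn (fun t => gau q t * dscore q t / score q t ^ 2) (Iic x) := by
    refine Integrable.mono' (hgi.const_mul (8 / x ^ 2)) ?_
      ((ae_restrict_iff' measurableSet_Iic).2 (ae_of_all _ b3))
    refine Measurable.aestronglyMeasurable ?_
    unfold gau dscore score
    fun_prop
  have t3 : Tendsto (fun t => gau q t / score q t) atBot (nhds 0) := by
    have : Tendsto (gau q) atBot (nhds 0) := by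
      refine (tendsto_poly_gauss (q ^ 2)).congr fun t => ?_
      simp [gau]
    refine squeeze_zero_norm' ?_ this
    filter_upwards [eventually_le_atBot x] with t ht
    have h1 := hs1 t ht
    have h2 := gau_nonneg q t
    rw [Real.norm_eq_abs, abs_div, abs_of_nonneg h2, abs_of_nonneg (by linarith)]
    exact div_le_self h2 (by linarith)
  have v3 := integral_Iic_of_hasDerivAt_of_tendsto (d3 x self_mem_Iic).continuousAt.continuousWithinAt
    (fun t ht => d3 t (Iio_subset_Iic_self ht)) (hgi.sub i3) t3
  rw [integral_sub hgi i3, sub_zero] at v3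
  rw [← v3, sub_sub_cancel]
  calc |∫ t in Iic x, gau q t * dscore q t / score q t ^ 2|
      ≤ ∫ t in Iic x, 8 / x ^ 2 * gau q t :=
        by
          rw [← Real.norm_eq_abs]
          exact norm_integral_le_of_norm_le (hgi.const_mul (8 / x ^ 2))
            ((ae_restrict_iff' measurableSet_Iic).2 (ae_of_all _ b3))
    _ = 8 / x ^ 2 * ∫ t in Iic x, gau q t := integral_const_mul _ _
    _ ≤ 8 / x ^ 2 * (2 / (-x) * gau q x) := by gcongr
    _ = 16 * gau q x / (-x) ^ 3 := by field_simp; ring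

/-- The left-hand bounds near `-∞`; `X` and `C` depend on `q` alone. -/
lemma left_bounds_infinity (q : Polynomial ℝ) (hq : q ≠ 0) :
    ∃ X C : ℝ, ∀ S : Set ℝ, ∀ x ≤ X, Iio x ⊆ S →
      (1 + |x|) * |leftKernel q S x| ≤ C ∧ leftRemainder q S x ≤ C := by
  obtain ⟨X₀, hX₀⟩ := eventually_atBot.1 (score_eventually q hq)
  refine ⟨min X₀ (-4), 200, fun S x hx hxS => ?_⟩
  obtain ⟨hB, hE⟩ := tail_bounds (q := q) (min_le_right X₀ (-4))
    (fun t ht => hX₀ t (ht.trans (min_le_left _ _))) hx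
  obtain ⟨h0, h1, h2, h3⟩ := hX₀ x (hx.trans (min_le_left _ _))
  have hx4 : x ≤ -4 := hx.trans (min_le_right _ _)
  have hf := gau_pos h0
  unfold leftKernel leftRemainder massLeft momentLeft
  rw [inter_eq_right.2 hxS, ← integral_Iic_eq_integral_Iio, ← integral_Iic_eq_integral_Iio]
  set A := ∫ t in Iic x, gau q t
  set B := ∫ t in Iic x, gau q t * (x - t)
  obtain ⟨y, rfl⟩ : ∃ y, x = -y := ⟨-x, by ring⟩
  have hy : 4 ≤ y := by linarith
  have hy0 : 0 < y := by linarith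
  generalize score q (-y) = s at *
  generalize dscore q (-y) = s' at *
  generalize gau q (-y) = f at *
  have hs0 : 0 < s := by linarith
  rw [abs_le] at h3
  have hT : |s ^ 2 - s'| ≤ 5 * y ^ 2 := by rw [abs_le]; constructor <;> nlinarith
  constructor
  · obtain ⟨ε, hε⟩ : ∃ ε, A = f / s + ε := ⟨A - f / s, by ring⟩
    rw [hε] at hE ⊢
    have hE' : |ε / f| ≤ 16 / y ^ 3 := by
      rw [abs_div, abs_of_pos hf, div_le_iff₀ hf]
      calc |ε| = |f / s + ε - f / s| := by ring_nf
        _ ≤ _ := hE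
        _ = _ := by simp; ring
    have e : -s + (s ^ 2 - s') * ((f / s + ε) / f) = -(s' / s) + (s ^ 2 - s') * (ε / f) := by
      field_simp; ring
    have b1 : |s' / s| ≤ 4 / y := by
      rw [abs_div, abs_of_pos hs0, div_le_div_iff₀ hs0 hy0]
      have : |s'| ≤ 2 := abs_le.2 h3
      nlinarith
    have b2 : |-s + (s ^ 2 - s') * ((f / s + ε) / f)| ≤ 84 / y := by
      rw [e]
      calc _ ≤ |s' / s| + |s ^ 2 - s'| * |ε / f| := by
            rw [← abs_mul, ← abs_neg (s' / s)]; exact abs_add_le _ _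
        _ ≤ 4 / y + 5 * y ^ 2 * (16 / y ^ 3) := by gcongr
        _ = 84 / y := by field_simp; norm_num
    rw [abs_neg, abs_of_pos hy0]
    calc _ ≤ (1 + y) * (84 / y) := by gcongr
      _ ≤ 200 := by rw [mul_div_assoc', div_le_iff₀ hy0]; linarith
  · have : B / f ≤ 4 / y ^ 2 := by
      rw [div_le_iff₀ hf]; refine hB.trans (le_of_eq ?_); field_simp
    have h4 : 0 ≤ 4 / y ^ 2 := by positivity
    calc _ ≤ |s ^ 2 - s'| * (4 / y ^ 2) := by gcongr
      _ ≤ 5 * y ^ 2 * (4 / y ^ 2) := by gcongr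
      _ = 20 := by field_simp; norm_num
      _ ≤ 200 := by norm_num

/-! ### A finite end -/

lemma dscore_continuousOn {q : Polynomial ℝ} {K : Set ℝ} (h : ∀ t ∈ K, q.eval t ≠ 0) :
    ContinuousOn (dscore q) K := by
  unfold dscore
  refine ContinuousOn.sub (ContinuousOn.div (by fun_prop) (by fun_prop) fun t ht => ?_) (by fun_prop)
  exact pow_ne_zero _ (h t ht)

/-- The left-hand bounds at a finite end `a`, where `q` has a zero of some order `n`. The argument
works for every `n`, including `n = 0`, so `q a = 0` is not assumed. The proof factors
`q = (X - a)^n w` with `w a ≠ 0`; all constants come from the compact interval `[a, x₀]`, on which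
`w` does not vanish. -/
lemma left_bounds_zero (q : Polynomial ℝ) (hq : q ≠ 0) (a x₀ : ℝ)
    (hne : ∀ t ∈ Ioc a x₀, q.eval t ≠ 0) :
    ∃ C : ℝ, ∀ S : Set ℝ, ∀ x ∈ Ioc a x₀, S ∩ Iio x = Ioo a x →
      (1 + |x|) * |leftKernel q S x| ≤ C ∧ leftRemainder q S x ≤ C := by
  obtain ⟨w, hqw, hw⟩ := Polynomial.exists_eq_pow_rootMultiplicity_mul_and_not_dvd q hq a
  generalize q.rootMultiplicity a = n at hqw
  have hqe : ∀ t, q.eval t = (t - a) ^ n * w.eval t := fun t => by rw [hqw]; simp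
  have hwne : ∀ t ∈ Icc a x₀, w.eval t ≠ 0 := fun t ht => by
    rcases eq_or_lt_of_le ht.1 with rfl | h
    · rwa [Polynomial.dvd_iff_isRoot] at hw
    · have := hne t ⟨h, ht.2⟩
      rw [hqe] at this
      exact right_ne_zero_of_mul this
  have hgau : ∀ t, gau q t = (t - a) ^ (2 * n) * gau w t := fun t => by
    simp only [gau, hqe]; ring
  have hsc : ∀ t, t ≠ a → w.eval t ≠ 0 → score q t = 2 * n / (t - a) + score w t :=
    fun t hta h1 => by
    have hd : t - a ≠ 0 := sub_ne_zero.2 hta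
    have h2 : q.eval t ≠ 0 := by rw [hqe]; exact mul_ne_zero (pow_ne_zero _ hd) h1
    have d1 : HasDerivAt (fun t => (t - a) ^ (2 * n) * gau w t) _ t :=
      (((hasDerivAt_id t).sub_const a).pow (2 * n)).mul (gau_hasDerivAt h1)
    have d2 := gau_hasDerivAt h2
    rw [show gau q = fun t => (t - a) ^ (2 * n) * gau w t from funext hgau] at d2
    have e := d2.unique d1
    have hp := (gau_pos h1).ne'
    simp only [id, Pi.pow_apply] at e
    rcases n with _ | n
    · simp at e ⊢; tauto
    · rw [show 2 * (n + 1) - 1 = 2 * n + 1 by omega, show 2 * (n + 1) = 2 * n + 1 + 1 by omega,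
        pow_succ (t - a) (2 * n + 1)] at e
      have hpw : (t - a) ^ (2 * n + 1) ≠ 0 := pow_ne_zero _ hd
      field_simp
      apply mul_left_cancel₀ (mul_ne_zero hpw hp)
      push_cast at e ⊢
      linear_combination e
  have hds : ∀ t, t ≠ a → w.eval t ≠ 0 →
      dscore q t = -(2 * n) / (t - a) ^ 2 + dscore w t := fun t hta h1 => by
    have hd : t - a ≠ 0 := sub_ne_zero.2 hta
    have h2 : q.eval t ≠ 0 := by rw [hqe]; exact mul_ne_zero (pow_ne_zero _ hd) h1
    have d1 : HasDerivAt (fun t => 2 * n / (t - a) + score w t) _ t :=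
      ((hasDerivAt_const t (2 * (n : ℝ))).div ((hasDerivAt_id t).sub_const a) hd).add
        (score_hasDerivAt h1)
    have d2 := (score_hasDerivAt h2).congr_of_eventuallyEq
      (f₁ := fun t => 2 * n / (t - a) + score w t) (by
        filter_upwards [eventually_ne_nhds hta, w.continuous.continuousAt.eventually_ne h1]
          with y hy1 hy2
        rw [hsc y hy1 hy2])
    rw [d2.unique d1]
    simp
  -- `N / d + score w` and `-N / d² + dscore w`, with `d = x - a`, are now the score of `q` and its
  -- derivative; the terms in `w` are bounded up to the end `a`
  have hK := isCompact_Icc (a := a) (b := x₀)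
  obtain ⟨C₁, hC₁⟩ := hK.exists_bound_of_continuousOn (f := score w)
    fun t ht => (score_hasDerivAt (hwne t ht)).continuousAt.continuousWithinAt
  obtain ⟨C₂, hC₂⟩ := hK.exists_bound_of_continuousOn (dscore_continuousOn hwne)
  obtain ⟨M, hM⟩ := hK.exists_bound_of_continuousOn (gau_continuous w).continuousOn
  obtain ⟨L, hL⟩ := hK.exists_bound_of_continuousOn (f := fun t => 1 / gau w t)
    (continuousOn_const.div (gau_continuous w).continuousOn fun t ht => (gau_pos (hwne t ht)).ne')
  have hdc : Continuous fun t => (2 * w.derivative * w - Polynomial.X * w ^ 2).eval t *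
      Real.exp (-t ^ 2 / 2) := by fun_prop
  obtain ⟨C₃, hC₃⟩ := hK.exists_bound_of_continuousOn hdc.continuousOn
  set φ' : ℝ → ℝ := fun t => (2 * w.derivative * w - Polynomial.X * w ^ 2).eval t *
      Real.exp (-t ^ 2 / 2) with hφ'
  obtain ⟨N, hN⟩ : ∃ N : ℝ, N = 2 * n := ⟨_, rfl⟩
  have hN0 : 0 ≤ N := by rw [hN]; positivity
  set D := x₀ - a
  set T := N * (N + 1) + 2 * N * C₁ * D + D ^ 2 * (C₁ ^ 2 + C₂)
  refine ⟨max ((1 + (|a| + D)) * (C₁ + (2 * N * C₁ + D * (C₁ ^ 2 + C₂)) + T * (C₃ * L)))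
    (T * (M * L)), fun S x hx hS => ?_⟩
  have hxI : x ∈ Icc a x₀ := Ioc_subset_Icc_self hx
  have hax : a ≤ x := hxI.1
  have hxa : x ≠ a := hx.1.ne'
  have hf := gau_pos (hne x hx)
  have hfx := hgau x
  unfold leftKernel leftRemainder massLeft momentLeft
  rw [hS, ← integral_Ioc_eq_integral_Ioo, ← integral_Ioc_eq_integral_Ioo,
    ← intervalIntegral.integral_of_le hax, ← intervalIntegral.integral_of_le hax,
    hsc x hxa (hwne x hxI), hds x hxa (hwne x hxI), ← hN]
  have hφx := gau_pos (hwne x hxI)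
  obtain ⟨d, hd⟩ : ∃ d, d = x - a := ⟨_, rfl⟩
  rw [← hd] at hfx ⊢
  have hd0 : 0 < d := by rw [hd]; exact sub_pos.2 hx.1
  have hdD : d ≤ D := by rw [hd]; exact sub_le_sub_right hx.2 a
  have hpow : d ^ (2 * n) ≤ L * gau q x := by
    rw [hfx]
    have h1 := hL x hxI
    rw [Real.norm_eq_abs, abs_of_pos (by positivity), div_le_iff₀ hφx] at h1
    have : 0 < d ^ (2 * n) := by positivity
    nlinarith
  have hC₃0 : 0 ≤ C₃ := (norm_nonneg _).trans (hC₃ x hxI)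
  have hM0 : 0 ≤ M := (norm_nonneg _).trans (hM x hxI)
  have hL0 : 0 ≤ L := (norm_nonneg _).trans (hL x hxI)
  have hA : |(∫ t in a..x, gau q t) - d * gau q x / (N + 1)| ≤ C₃ * L * d ^ 2 * gau q x := by
    -- `(t - a) f(t) / (N + 1)` is a primitive of `f` up to a term of one order more in `t - a`
    have hder : ∀ t ∈ uIcc a x, HasDerivAt (fun t => (t - a) ^ (2 * n + 1) * gau w t / (N + 1))
        (gau q t + (t - a) ^ (2 * n + 1) * φ' t / (N + 1)) t := fun t _ => by
      have h1 := (((((hasDerivAt_id t).sub_const a).pow (2 * n + 1)).mul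
        (gau_hasDerivAt' w t)).div_const (N + 1))
      refine h1.congr_deriv ?_
      rw [hgau t]
      simp only [hφ', id, Pi.pow_apply, Nat.add_sub_cancel]
      have : N + 1 ≠ 0 := by positivity
      field_simp
      push_cast
      rw [← hN]
      ring
    have i1 : IntervalIntegrable (gau q) volume a x := (gau_continuous q).intervalIntegrable _ _
    have i2 : IntervalIntegrable (fun t => (t - a) ^ (2 * n + 1) * φ' t / (N + 1)) volume a x :=
      Continuous.intervalIntegrable (by fun_prop) _ _
    have v := intervalIntegral.integral_eq_sub_of_hasDerivAt hder (i1.add i2)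
    rw [intervalIntegral.integral_add i1 i2] at v
    have e : (∫ t in a..x, gau q t) - d * gau q x / (N + 1) =
        -∫ t in a..x, (t - a) ^ (2 * n + 1) * φ' t / (N + 1) := by
      rw [← hd] at v
      rw [hfx]
      simp only [sub_self, ne_eq, Nat.add_eq_zero_iff, one_ne_zero, and_false,
        not_false_eq_true, zero_pow, zero_mul, zero_div, sub_zero] at v
      rw [eq_sub_of_add_eq v]
      ring
    rw [e, abs_neg]
    have b := intervalIntegral.norm_integral_le_of_norm_le_const (a := a) (b := x)
      (f := fun t => (t - a) ^ (2 * n + 1) * φ' t / (N + 1)) (C := d ^ (2 * n + 1) * C₃)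
      (fun t ht => by
        rw [uIoc_of_le hax] at ht
        have h1 : 0 ≤ t - a := sub_nonneg.2 ht.1.le
        have h2 : t - a ≤ d := by rw [hd]; linarith [ht.2]
        have h3 := hC₃ t ⟨ht.1.le, ht.2.trans hx.2⟩
        rw [norm_div, norm_mul, norm_pow, Real.norm_of_nonneg h1,
          Real.norm_of_nonneg (show 0 ≤ N + 1 by positivity)]
        refine (div_le_self (by positivity) (by linarith)).trans ?_
        gcongr)
    rw [← hd, abs_of_pos hd0] at b
    refine b.trans ?_
    calc d ^ (2 * n + 1) * C₃ * d = d ^ 2 * C₃ * d ^ (2 * n) := by ring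
      _ ≤ d ^ 2 * C₃ * (L * gau q x) := by gcongr
      _ = _ := by ring
  have hB : |∫ t in a..x, gau q t * (x - t)| ≤ M * L * d ^ 2 * gau q x := by
    have b := intervalIntegral.norm_integral_le_of_norm_le_const (a := a) (b := x)
      (f := fun t => gau q t * (x - t)) (C := d ^ (2 * n) * M * d)
      (fun t ht => by
        rw [uIoc_of_le hax] at ht
        have h1 : 0 ≤ t - a := sub_nonneg.2 ht.1.le
        have h2 : t - a ≤ d := by rw [hd]; linarith [ht.2]
        have h3 := hM t ⟨ht.1.le, ht.2.trans hx.2⟩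
        have h4 : 0 ≤ x - t := sub_nonneg.2 ht.2
        rw [hgau t, norm_mul, norm_mul, norm_pow, Real.norm_of_nonneg h1,
          Real.norm_of_nonneg h4]
        gcongr
        rw [hd]; linarith)
    rw [← hd, abs_of_pos hd0] at b
    refine b.trans ?_
    calc d ^ (2 * n) * M * d * d = d ^ 2 * M * d ^ (2 * n) := by ring
      _ ≤ d ^ 2 * M * (L * gau q x) := by gcongr
      _ = _ := by ring
  have hψ := hC₁ x hxI
  have hψ' := hC₂ x hxI
  rw [Real.norm_eq_abs] at hψ hψ'
  have hxabs : |x| ≤ |a| + D := by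
    calc |x| = |a + d| := by rw [hd]; ring_nf
      _ ≤ |a| + |d| := abs_add_le _ _
      _ ≤ |a| + D := by rw [abs_of_pos hd0]; gcongr
  generalize (∫ t in a..x, gau q t) = A at *
  generalize (∫ t in a..x, gau q t * (x - t)) = B at *
  generalize score w x = ψ at *
  generalize dscore w x = ψ' at *
  generalize gau q x = f at *
  have hC₁0 : 0 ≤ C₁ := (abs_nonneg _).trans hψ
  have hC₂0 : 0 ≤ C₂ := (abs_nonneg _).trans hψ'
  have hD0 : 0 ≤ D := hd0.le.trans hdD
  -- `ε` is the error in the mass relative to `d² f`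
  obtain ⟨ε, hε⟩ : ∃ ε, A = d * f / (N + 1) + ε * (d ^ 2 * f) :=
    ⟨(A - d * f / (N + 1)) / (d ^ 2 * f), by field_simp; ring⟩
  have hε' : |ε| ≤ C₃ * L := by
    rw [hε, add_sub_cancel_left, abs_mul, abs_of_pos (by positivity : 0 < d ^ 2 * f), mul_assoc] at hA
    exact le_of_mul_le_mul_right hA (by positivity)
  have hρ : |ψ ^ 2 - ψ'| ≤ C₁ ^ 2 + C₂ := by
    refine (abs_sub _ _).trans ?_
    rw [abs_pow]
    gcongr
  set τ := N * (N + 1) + 2 * N * ψ * d + d ^ 2 * (ψ ^ 2 - ψ')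
  have hτ : |τ| ≤ T := by
    calc |τ| ≤ |N * (N + 1)| + |2 * N * ψ * d| + |d ^ 2 * (ψ ^ 2 - ψ')| :=
          abs_add_three _ _ _
      _ = N * (N + 1) + 2 * N * |ψ| * d + d ^ 2 * |ψ ^ 2 - ψ'| := by
          simp only [abs_mul, abs_pow, abs_of_pos hd0, abs_of_nonneg hN0,
            abs_of_nonneg (show 0 ≤ N + 1 by positivity), abs_two]
      _ ≤ N * (N + 1) + 2 * N * C₁ * D + D ^ 2 * (C₁ ^ 2 + C₂) := by gcongr
  have hτe : (N / d + ψ) ^ 2 - (-N / d ^ 2 + ψ') = τ / d ^ 2 := by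
    field_simp; ring
  rw [hτe]
  constructor
  · refine le_trans ?_ (le_max_left _ _)
    -- the terms `-N / d` and `N (N + 1) / d² * d / (N + 1)` cancel
    have e : -(N / d + ψ) + τ / d ^ 2 * (A / f) =
        -ψ + (2 * N * ψ + d * (ψ ^ 2 - ψ')) / (N + 1) + τ * ε := by
      rw [hε]
      field_simp
      ring
    rw [e]
    have b1 : |(2 * N * ψ + d * (ψ ^ 2 - ψ')) / (N + 1)| ≤ 2 * N * C₁ + D * (C₁ ^ 2 + C₂) := by
      rw [abs_div, abs_of_nonneg (show 0 ≤ N + 1 by positivity)]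
      refine (div_le_self (abs_nonneg _) (by linarith)).trans ((abs_add_le _ _).trans ?_)
      rw [abs_mul, abs_mul, abs_mul, abs_two, abs_of_nonneg hN0, abs_of_pos hd0]
      gcongr
    have b2 : |τ * ε| ≤ T * (C₃ * L) := by
      rw [abs_mul]; gcongr
    gcongr
    refine (abs_add_three _ _ _).trans ?_
    rw [abs_neg]
    gcongr
  · refine le_trans ?_ (le_max_right _ _)
    rw [abs_div, abs_of_pos (show 0 < d ^ 2 by positivity)]
    have b : B / f ≤ M * L * d ^ 2 := by
      rw [div_le_iff₀ hf]; exact (le_abs_self _).trans hB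
    calc |τ| / d ^ 2 * (B / f) ≤ |τ| / d ^ 2 * (M * L * d ^ 2) := by gcongr
      _ = |τ| * (M * L) := by field_simp
      _ ≤ T * (M * L) := by gcongr

/-! ### Both ends -/

lemma massLeft_nonneg (q : Polynomial ℝ) (S : Set ℝ) (x : ℝ) : 0 ≤ massLeft q S x :=
  integral_nonneg fun t => gau_nonneg q t

lemma massLeft_le (q : Polynomial ℝ) (S : Set ℝ) (x : ℝ) : massLeft q S x ≤ ∫ t, gau q t :=
  setIntegral_le_integral (gau_integrable q) (ae_of_all _ fun t => gau_nonneg q t)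

lemma momentLeft_le (q : Polynomial ℝ) (S : Set ℝ) (x : ℝ) :
    momentLeft q S x ≤ |x| * (∫ t, gau q t) + ∫ t, |gau q t * t| := by
  have h1 := gau_mul_sub_integrable q x
  have h2 := (gau_integrable q).const_mul |x|
  have h3 := (gau_mul_id_integrable q).abs
  calc momentLeft q S x ≤ ∫ t in S ∩ Iio x, |gau q t * (x - t)| :=
        (le_abs_self _).trans (abs_integral_le_integral_abs)
    _ ≤ ∫ t, |gau q t * (x - t)| :=
        setIntegral_le_integral h1.abs (ae_of_all _ fun t => abs_nonneg _)
    _ ≤ ∫ t, (|x| * gau q t + |gau q t * t|) := by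
        refine integral_mono h1.abs (h2.add h3) fun t => ?_
        simp only [abs_mul, abs_of_nonneg (gau_nonneg q t)]
        nlinarith [gau_nonneg q t, abs_sub x t]
    _ = _ := by rw [integral_add h2 h3, integral_const_mul]

lemma left_bounds_compact (q : Polynomial ℝ) (X x₀ : ℝ)
    (hne : ∀ t ∈ Icc X x₀, q.eval t ≠ 0) :
    ∃ C : ℝ, ∀ S : Set ℝ, ∀ x ∈ Icc X x₀,
      (1 + |x|) * |leftKernel q S x| ≤ C ∧ leftRemainder q S x ≤ C := by
  set Z := ∫ t, gau q t
  set Z₁ := ∫ t, |gau q t * t|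
  have c1 : ContinuousOn (score q) (Icc X x₀) := fun t ht =>
    (score_hasDerivAt (hne t ht)).continuousAt.continuousWithinAt
  have c2 := dscore_continuousOn hne
  have c3 : ContinuousOn (gau q) (Icc X x₀) := (gau_continuous q).continuousOn
  have hp : ∀ t ∈ Icc X x₀, gau q t ≠ 0 := fun t ht => (gau_pos (hne t ht)).ne'
  obtain ⟨C, hC⟩ := isCompact_Icc.exists_bound_of_continuousOn
    (f := fun x => (1 + |x|) * (|score q x| + |score q x ^ 2 - dscore q x| * (Z / gau q x)))
    (s := Icc X x₀) (by fun_prop (disch := assumption))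
  obtain ⟨C', hC'⟩ := isCompact_Icc.exists_bound_of_continuousOn
    (f := fun x => |score q x ^ 2 - dscore q x| * ((|x| * Z + Z₁) / gau q x))
    (s := Icc X x₀) (by fun_prop (disch := assumption))
  refine ⟨max C C', fun S x hx => ⟨?_, ?_⟩⟩
  · refine le_trans ?_ (((le_abs_self _).trans (hC x hx)).trans (le_max_left _ _))
    gcongr
    refine (abs_add_le _ _).trans ?_
    rw [abs_neg, abs_mul, abs_of_nonneg (div_nonneg (massLeft_nonneg q S x) (gau_nonneg q x))]
    gcongr
    · exact gau_nonneg q x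
    · exact massLeft_le q S x
  · refine le_trans ?_ (((le_abs_self _).trans (hC' x hx)).trans (le_max_right _ _))
    unfold leftRemainder
    gcongr
    · exact gau_nonneg q x
    · exact momentLeft_le q S x

/-- The left-hand bounds on all of `S` to the left of a point `x₀ ∈ S`, whichever kind of end `a`
is. -/
lemma left_bounds (q : Polynomial ℝ) (hq : q ≠ 0) (a b : EReal)
    (ha : a = ⊥ ∨ ∃ a' : ℝ, a = (a' : EReal))
    (S : Set ℝ) (hS : S = {t : ℝ | a < (t : EReal) ∧ (t : EReal) < b})
    (hne : ∀ t ∈ S, q.eval t ≠ 0) (x₀ : ℝ) (hx₀ : x₀ ∈ S) :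
    ∃ C : ℝ, ∀ x ∈ S, x ≤ x₀ →
      (1 + |x|) * |leftKernel q S x| ≤ C ∧ leftRemainder q S x ≤ C := by
  rw [hS] at hx₀
  rcases ha with rfl | ⟨a, rfl⟩
  · have hsub : Iic x₀ ⊆ S := fun t ht => by
      rw [hS]
      exact ⟨EReal.bot_lt_coe t, lt_of_le_of_lt (EReal.coe_le_coe_iff.2 ht) hx₀.2⟩
    obtain ⟨X, C, h⟩ := left_bounds_infinity q hq
    obtain ⟨C', h'⟩ := left_bounds_compact q X x₀ fun t ht => hne t (hsub ht.2)
    refine ⟨max C C', fun x _ hx => ?_⟩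
    rcases le_total x X with hxX | hxX
    · obtain ⟨h1, h2⟩ := h S x hxX fun t ht => hsub (le_trans (le_of_lt ht) hx)
      exact ⟨h1.trans (le_max_left _ _), h2.trans (le_max_left _ _)⟩
    · obtain ⟨h1, h2⟩ := h' S x ⟨hxX, hx⟩
      exact ⟨h1.trans (le_max_right _ _), h2.trans (le_max_right _ _)⟩
  · have hsub : Ioc a x₀ ⊆ S := fun t ht => by
      rw [hS]
      exact ⟨EReal.coe_lt_coe_iff.2 ht.1, lt_of_le_of_lt (EReal.coe_le_coe_iff.2 ht.2) hx₀.2⟩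
    obtain ⟨C, h⟩ := left_bounds_zero q hq a x₀ fun t ht => hne t (hsub ht)
    refine ⟨C, fun x hxS hx => ?_⟩
    have hax : a < x := by
      rw [hS] at hxS; exact EReal.coe_lt_coe_iff.1 hxS.1
    refine h S x ⟨hax, hx⟩ (Subset.antisymm (fun t ht => ⟨?_, ht.2⟩) fun t ht =>
      ⟨hsub ⟨ht.1, ht.2.le.trans hx⟩, ht.2⟩)
    have := ht.1
    rw [hS] at this
    exact EReal.coe_lt_coe_iff.1 this.1

/-! ### Reflection -/

lemma gau_reflect (q : Polynomial ℝ) (t : ℝ) :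
    gau (q.comp (-Polynomial.X)) t = gau q (-t) := by simp [gau]

lemma score_reflect (q : Polynomial ℝ) (t : ℝ) :
    score (q.comp (-Polynomial.X)) t = -score q (-t) := by
  simp [score, Polynomial.derivative_comp]; ring

lemma dscore_reflect (q : Polynomial ℝ) (t : ℝ) :
    dscore (q.comp (-Polynomial.X)) t = dscore q (-t) := by
  simp [dscore, Polynomial.derivative_comp]

lemma setIntegral_reflect (S : Set ℝ) (x : ℝ) (φ : ℝ → ℝ) :
    ∫ t in -S ∩ Iio (-x), φ (-t) = ∫ t in S ∩ Ici x, φ t := by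
  have e := (Measure.measurePreserving_neg (volume : Measure ℝ)).setIntegral_preimage_emb
    (MeasurableEquiv.neg ℝ).measurableEmbedding φ (S ∩ Ioi x)
  rw [setIntegral_congr_set ((ae_eq_refl S).inter Ioi_ae_eq_Ici)] at e
  rw [← e]
  congr 2
  ext t
  simp

/-- The mirror image of `left_bounds`. The first quantity is `-K` with `-∫_{S ∩ [x, ∞)}` in place
of the left-hand mass. -/
lemma right_bounds (q : Polynomial ℝ) (hq : q ≠ 0) (a b : EReal)
    (hb : b = ⊤ ∨ ∃ b' : ℝ, b = (b' : EReal))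
    (S : Set ℝ) (hS : S = {t : ℝ | a < (t : EReal) ∧ (t : EReal) < b})
    (hne : ∀ t ∈ S, q.eval t ≠ 0) (x₀ : ℝ) (hx₀ : x₀ ∈ S) :
    ∃ C : ℝ, ∀ x ∈ S, x₀ ≤ x →
      (1 + |x|) * |score q x + (score q x ^ 2 - dscore q x) *
        ((∫ t in S ∩ Ici x, gau q t) / gau q x)| ≤ C ∧
      |score q x ^ 2 - dscore q x| *
        ((∫ t in S ∩ Ici x, gau q t * (t - x)) / gau q x) ≤ C := by
  have hq' : q.comp (-Polynomial.X) ≠ 0 := by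
    intro h
    apply hq
    have := congrArg (fun p => Polynomial.comp p (-Polynomial.X)) h
    simpa [Polynomial.comp_assoc] using this
  obtain ⟨C, h⟩ := left_bounds (q.comp (-Polynomial.X)) hq' (-b) (-a)
    (by rcases hb with rfl | ⟨b, rfl⟩
        · exact Or.inl (by simp)
        · exact Or.inr ⟨-b, by simp⟩) (-S)
    (by ext t
        simp only [hS, Set.mem_neg, mem_ofPred_eq, EReal.coe_neg]
        rw [EReal.lt_neg_comm, EReal.neg_lt_comm, and_comm])
    (fun t ht => by simpa using hne (-t) ht) (-x₀) (by simpa using hx₀)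
  refine ⟨C, fun x hx hxx => ?_⟩
  have := h (-x) (by simpa using hx) (neg_le_neg hxx)
  have e1 := setIntegral_reflect S x (gau q)
  have e2 := setIntegral_reflect S x (fun t => gau q t * (t - x))
  simp only [leftKernel, leftRemainder, massLeft, momentLeft, gau_reflect, score_reflect,
    dscore_reflect, neg_neg, abs_neg, neg_sq] at this
  rw [e1] at this
  rw [← e2]
  simpa [add_comm, sub_eq_add_neg] using this

/-! ### The Stein solution -/

lemma gau_mul_lipschitz_integrable (q : Polynomial ℝ) {h : ℝ → ℝ} (hL : LipschitzWith 1 h) :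
    Integrable (fun t => gau q t * h t) := by
  have h2 := (gau_integrable q).const_mul |h 0|
  have h3 := (gau_mul_id_integrable q).abs
  refine (h2.add h3).mono'
    ((gau_continuous q).mul hL.continuous).aestronglyMeasurable (ae_of_all _ fun t => ?_)
  have := hL.dist_le_mul t 0
  simp only [Real.dist_eq, sub_zero, NNReal.coe_one, one_mul] at this
  have h4 : |h t| ≤ |h 0| + |t| := by
    calc |h t| = |h 0 + (h t - h 0)| := by ring_nf
      _ ≤ |h 0| + |h t - h 0| := abs_add_le _ _
      _ ≤ _ := by gcongr
  simp only [Real.norm_eq_abs, abs_mul, abs_of_nonneg (gau_nonneg q t), Pi.add_apply]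
  nlinarith [gau_nonneg q t]

lemma gau_mul_lipschitz_sub_integrable (q : Polynomial ℝ) {h : ℝ → ℝ} (hL : LipschitzWith 1 h)
    (e : ℝ) : Integrable (fun t => gau q t * (h t - e)) := by
  refine ((gau_mul_lipschitz_integrable q hL).sub ((gau_integrable q).mul_const e)).congr
    (ae_of_all _ fun t => ?_)
  simp [mul_sub]

lemma gau_setIntegral_pos (q : Polynomial ℝ) {S : Set ℝ} (hSo : IsOpen S) (hSn : S.Nonempty)
    (hne : ∀ t ∈ S, q.eval t ≠ 0) : 0 < ∫ t in S, gau q t := by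
  rw [setIntegral_pos_iff_support_of_nonneg_ae (ae_of_all _ fun t => gau_nonneg q t)
    (gau_integrable q).integrableOn, inter_eq_right.2 (show S ⊆ Function.support (gau q) from
      fun t ht => (gau_pos (hne t ht)).ne')]
  exact hSo.measure_pos volume hSn

lemma integral_densMeasure (q : Polynomial ℝ) (S : Set ℝ) (h : ℝ → ℝ) :
    ∫ s, h s ∂(densMeasure (gau q) S) =
      (∫ t in S, gau q t * h t) / ∫ t in S, gau q t := by
  unfold densMeasure
  rw [integral_withDensity_eq_integral_toReal_smul
    (((gau_continuous q).measurable.div_const _).ennreal_ofReal)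
    (ae_of_all _ fun t => ENNReal.ofReal_lt_top), ← integral_div]
  refine integral_congr_ae (ae_of_all _ fun t => ?_)
  have : 0 ≤ gau q t / ∫ u in S, gau q u :=
    div_nonneg (gau_nonneg q t) (integral_nonneg fun t => gau_nonneg q t)
  simp only [ENNReal.toReal_ofReal this, smul_eq_mul]
  ring

lemma integral_centered (q : Polynomial ℝ) {S : Set ℝ} (hZ : 0 < ∫ t in S, gau q t) {h : ℝ → ℝ}
    (hL : LipschitzWith 1 h) :
    ∫ t in S, gau q t * (h t - ∫ s, h s ∂(densMeasure (gau q) S)) = 0 := by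
  simp only [mul_sub]
  rw [integral_sub (gau_mul_lipschitz_integrable q hL).integrableOn
    ((gau_integrable q).mul_const _).integrableOn, integral_mul_const, integral_densMeasure,
    mul_div_cancel₀ _ hZ.ne', sub_self]

lemma abs_centered_le (q : Polynomial ℝ) {S : Set ℝ} (hZ : 0 < ∫ t in S, gau q t) {h : ℝ → ℝ}
    (hL : LipschitzWith 1 h) (x : ℝ) :
    |h x - ∫ s, h s ∂(densMeasure (gau q) S)| ≤
      |x| + (∫ t in S, |gau q t * t|) / ∫ t in S, gau q t := by
  have i1 := (gau_mul_lipschitz_sub_integrable q hL (h x)).integrableOn (s := S)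
  have i2 := (gau_integrable q).integrableOn (s := S)
  have i3 := (gau_mul_id_integrable q).abs.integrableOn (s := S)
  have i4 : IntegrableOn (fun t => |x| * gau q t) S := i2.const_mul |x|
  have e : h x - ∫ s, h s ∂(densMeasure (gau q) S) =
      -((∫ t in S, gau q t * (h t - h x)) / ∫ t in S, gau q t) := by
    simp only [mul_sub]
    rw [integral_sub (gau_mul_lipschitz_integrable q hL).integrableOn (i2.mul_const _),
      integral_mul_const, integral_densMeasure]
    field_simp
    ring
  rw [e, abs_neg, abs_div, abs_of_pos hZ, div_le_iff₀ hZ, add_mul, div_mul_cancel₀ _ hZ.ne',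
    ← integral_const_mul, ← integral_add i4 i3]
  refine abs_integral_le_integral_abs.trans (integral_mono i1.abs (i4.add i3) fun t => ?_)
  have := hL.dist_le_mul t x
  simp only [Real.dist_eq, NNReal.coe_one, one_mul] at this
  simp only [abs_mul, abs_of_nonneg (gau_nonneg q t)]
  have h5 := abs_sub t x
  nlinarith [gau_nonneg q t]

/-- The fundamental theorem of calculus for the integral over the part of an open set `S` to the
left of a point of `S`. -/
lemma cumulative_hasDerivAt {φ : ℝ → ℝ} (hc : Continuous φ) (hi : Integrable φ) {S : Set ℝ}
    (hSo : IsOpen S) {x : ℝ} (hx : x ∈ S) :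
    HasDerivAt (fun y => ∫ t in S ∩ Iio y, φ t) (φ x) x := by
  set ψ := S.indicator φ
  have hψ : Integrable ψ := hi.indicator hSo.measurableSet
  have hev : ψ =ᶠ[nhds x] φ := by
    filter_upwards [hSo.mem_nhds hx] with y hy
    exact indicator_of_mem hy φ
  have hF : (fun y => ∫ t in S ∩ Iio y, φ t) =
      fun y => (∫ t in Iic x, ψ t) + ∫ t in x..y, ψ t := by
    funext y
    rw [← intervalIntegral.integral_Iic_sub_Iic hψ.integrableOn hψ.integrableOn,
      add_sub_cancel, integral_Iic_eq_integral_Iio, setIntegral_indicator hSo.measurableSet,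
      inter_comm]
  rw [hF]
  have hd := intervalIntegral.integral_hasDerivAt_right (f := ψ) (a := x) (b := x)
    (by simp) (hψ.aestronglyMeasurable.stronglyMeasurableAtFilter)
    (hc.continuousAt.congr hev.symm)
  rw [hev.eq_of_nhds] at hd
  exact hd.const_add _

lemma deriv_deriv_steinG (q : Polynomial ℝ) {S : Set ℝ} (hSo : IsOpen S)
    (hne : ∀ t ∈ S, q.eval t ≠ 0) {h : ℝ → ℝ} (hd : Differentiable ℝ h) (hL : LipschitzWith 1 h)
    {x : ℝ} (hx : x ∈ S) :
    deriv (deriv (steinG (gau q) S h)) x =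
      deriv h x - score q x * (h x - ∫ s, h s ∂(densMeasure (gau q) S)) +
        (score q x ^ 2 - dscore q x) *
          ((∫ t in S ∩ Iio x, gau q t * (h t - ∫ s, h s ∂(densMeasure (gau q) S))) / gau q x) := by
  set e := ∫ s, h s ∂(densMeasure (gau q) S) with he
  set F : ℝ → ℝ := fun y => ∫ t in S ∩ Iio y, gau q t * (h t - e)
  have hg : steinG (gau q) S h = fun y => F y / gau q y := by
    funext y
    simp only [steinG, ← he, F]
    ring
  have d1 : ∀ y ∈ S, HasDerivAt (fun y => F y / gau q y) (h y - e - score q y * (F y / gau q y)) y :=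
    fun y hy => by
      have hF : HasDerivAt F (gau q y * (h y - e)) y :=
        cumulative_hasDerivAt ((gau_continuous q).mul (hd.continuous.sub continuous_const))
          (gau_mul_lipschitz_sub_integrable q hL e) hSo hy
      have hp := (gau_pos (hne y hy)).ne'
      refine (hF.div (gau_hasDerivAt (hne y hy)) hp).congr_deriv ?_
      field_simp
  have d2 : deriv (fun y => F y / gau q y) =ᶠ[nhds x]
      fun y => h y - e - score q y * (F y / gau q y) := by
    filter_upwards [hSo.mem_nhds hx] with y hy
    exact (d1 y hy).deriv
  rw [hg, d2.deriv_eq]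
  have d3 := (((hd x).hasDerivAt.sub_const e).sub
    ((score_hasDerivAt (hne x hx)).mul (d1 x hx)))
  refine d3.deriv.trans ?_
  simp only [F]
  ring

lemma abs_remainder_le (q : Polynomial ℝ) {T : Set ℝ} (hT : MeasurableSet T) {h : ℝ → ℝ}
    (hL : LipschitzWith 1 h) (x : ℝ) :
    |∫ t in T, gau q t * (h t - h x)| ≤ ∫ t in T, gau q t * |x - t| := by
  refine abs_integral_le_integral_abs.trans
    (setIntegral_mono_on (gau_mul_lipschitz_sub_integrable q hL _).abs.integrableOn ?_ hT
      fun t _ => ?_)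
  · refine ((gau_mul_sub_integrable q x).abs.congr (ae_of_all _ fun t => ?_)).integrableOn
    simp only [abs_mul, abs_of_nonneg (gau_nonneg q t)]
  · have := hL.dist_le_mul t x
    simp only [Real.dist_eq, NNReal.coe_one, one_mul] at this
    rw [abs_mul, abs_of_nonneg (gau_nonneg q t), abs_sub_comm x t]
    exact mul_le_mul_of_nonneg_left this (gau_nonneg q t)

/-- Replaces `h(t)` by `h(x)` in the integral that defines the Stein solution. -/
lemma setIntegral_centered_split (q : Polynomial ℝ) (T : Set ℝ) {h : ℝ → ℝ}
    (hL : LipschitzWith 1 h) (x e : ℝ) :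
    ∫ t in T, gau q t * (h t - e) =
      (h x - e) * (∫ t in T, gau q t) + ∫ t in T, gau q t * (h t - h x) := by
  rw [← integral_const_mul, ← integral_add ((gau_integrable q).const_mul _).integrableOn
    (gau_mul_lipschitz_sub_integrable q hL _).integrableOn]
  refine integral_congr_ae (ae_of_all _ fun t => ?_)
  ring

/-- Here `d`, `η`, `k` and `r` stand for `h'(x)`, `h(x) - E_P[h]`, `K(x)` and the remainder. -/
lemma combine_bounds {x m η k r r' d C : ℝ} (hm : 0 ≤ m) (hd : |d| ≤ 1) (hη : |η| ≤ |x| + m)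
    (hk : (1 + |x|) * |k| ≤ C) (hr : |r| ≤ r') (hr' : r' ≤ C) :
    |d + η * k + r| ≤ 1 + (1 + m) * C + C := by
  have h1 : |η * k| ≤ (1 + m) * C := by
    rw [abs_mul]
    calc |η| * |k| ≤ ((1 + m) * (1 + |x|)) * |k| := by
          gcongr
          nlinarith [abs_nonneg x]
      _ = (1 + m) * ((1 + |x|) * |k|) := by ring
      _ ≤ _ := by gcongr
  linarith [abs_add_three d (η * k) r]

/-- The bound for `q² e^{-t²/2}`, with `q` any nonzero polynomial without zeros in `S`. -/
lemma stein_bound (q : Polynomial ℝ) (hq : q ≠ 0) (a b : EReal)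
    (ha : a = ⊥ ∨ ∃ a' : ℝ, a = (a' : EReal)) (hb : b = ⊤ ∨ ∃ b' : ℝ, b = (b' : EReal))
    (S : Set ℝ) (hS : S = {t : ℝ | a < (t : EReal) ∧ (t : EReal) < b})
    (hne : ∀ t ∈ S, q.eval t ≠ 0) :
    ∃ C : ℝ, ∀ h : ℝ → ℝ, Differentiable ℝ h → LipschitzWith 1 h →
      ∀ t ∈ S, |deriv (deriv (steinG (gau q) S h)) t| ≤ C := by
  rcases S.eq_empty_or_nonempty with h0 | ⟨x₀, hx₀⟩
  · exact ⟨0, fun h _ _ t ht => by simp [h0] at ht⟩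
  have hSo : IsOpen S := by
    rw [hS]
    exact (isOpen_lt continuous_const continuous_coe_real_ereal).inter
      (isOpen_lt continuous_coe_real_ereal continuous_const)
  have hZ := gau_setIntegral_pos q hSo ⟨x₀, hx₀⟩ hne
  obtain ⟨C₁, hC₁⟩ := left_bounds q hq a b ha S hS hne x₀ hx₀
  obtain ⟨C₂, hC₂⟩ := right_bounds q hq a b hb S hS hne x₀ hx₀
  set m := (∫ t in S, |gau q t * t|) / ∫ t in S, gau q t with hm
  have hm0 : 0 ≤ m := div_nonneg (integral_nonneg fun t => abs_nonneg _) hZ.le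
  refine ⟨max (1 + (1 + m) * C₁ + C₁) (1 + (1 + m) * C₂ + C₂), fun h hd hL x hx => ?_⟩
  have hη := abs_centered_le q hZ hL x
  have hcen := integral_centered q hZ hL
  have hdx : |deriv h x| ≤ 1 := by
    simpa using norm_deriv_le_of_lipschitz hL (x₀ := x)
  have hf := gau_pos (hne x hx)
  rw [deriv_deriv_steinG q hSo hne hd hL hx]
  rw [← hm] at hη
  generalize (∫ s, h s ∂(densMeasure (gau q) S)) = e at *
  rcases le_total x x₀ with hxx | hxx
  · refine le_trans ?_ (le_max_left _ _)
    obtain ⟨hk, hr⟩ := hC₁ x hx hxx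
    rw [setIntegral_centered_split q _ hL x e]
    have hR := abs_remainder_le q (hSo.measurableSet.inter measurableSet_Iio) hL x (T := S ∩ Iio x)
    rw [show ∫ t in S ∩ Iio x, gau q t * |x - t| = momentLeft q S x from
      setIntegral_congr_fun (hSo.measurableSet.inter measurableSet_Iio) fun t ht => by
        simp only [abs_of_nonneg (sub_nonneg.2 (show t ≤ x from le_of_lt (mem_Iio.1 ht.2)))]] at hR
    refine le_trans (le_of_eq ?_) (combine_bounds hm0 hdx hη hk
      (r := (score q x ^ 2 - dscore q x) * ((∫ t in S ∩ Iio x, gau q t * (h t - h x)) / gau q x))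
      ?_ hr)
    · congr 1
      unfold leftKernel massLeft
      ring
    · rw [abs_mul, abs_div, abs_of_pos hf]
      unfold leftRemainder
      gcongr
  · refine le_trans ?_ (le_max_right _ _)
    obtain ⟨hk, hr⟩ := hC₂ x hx hxx
    -- the integral of `f (h - e)` over `S` is zero, so the left part is minus the right part
    have hsplit : (∫ t in S ∩ Iio x, gau q t * (h t - e)) =
        -∫ t in S ∩ Ici x, gau q t * (h t - e) := by
      rw [eq_neg_iff_add_eq_zero, ← hcen, ← compl_Iio, ← sdiff_eq]
      exact integral_inter_add_sdiff measurableSet_Iio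
        (gau_mul_lipschitz_sub_integrable q hL e).integrableOn
    rw [hsplit, setIntegral_centered_split q _ hL x e]
    have hR := abs_remainder_le q (hSo.measurableSet.inter measurableSet_Ici) hL x (T := S ∩ Ici x)
    rw [show ∫ t in S ∩ Ici x, gau q t * |x - t| = ∫ t in S ∩ Ici x, gau q t * (t - x) from
      setIntegral_congr_fun (hSo.measurableSet.inter measurableSet_Ici) fun t ht => by
        simp only [abs_sub_comm x t, abs_of_nonneg (sub_nonneg.2 (show x ≤ t from ht.2))]] at hR
    rw [← abs_neg (score q x + _)] at hk
    refine le_trans (le_of_eq ?_) (combine_bounds hm0 hdx hη hk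
      (r := -((score q x ^ 2 - dscore q x) *
        ((∫ t in S ∩ Ici x, gau q t * (h t - h x)) / gau q x))) ?_ hr)
    · congr 1
      ring
    · rw [abs_neg, abs_mul, abs_div, abs_of_pos hf]
      gcongr

/-! ### Higher energy functions -/

lemma hermiteFun_eq (l : ℕ) (x : ℝ) :
    hermiteFun l x = ((Polynomial.hermite l).map (Int.castRingHom ℝ)).eval x := by
  have h := Polynomial.hermite_eq_deriv_gaussian l x
  rw [Polynomial.aeval_def, Polynomial.eval₂_eq_eval_map] at h
  have e : (fun t : ℝ => Real.exp (-t ^ 2 / 2)) = fun t => Real.exp (-(t ^ 2 / 2)) := by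
    funext t; rw [neg_div]
  rw [show Int.castRingHom ℝ = algebraMap ℤ ℝ from rfl, h, hermiteFun, e,
    iteratedDeriv_eq_iterate, Real.exp_neg (x ^ 2 / 2)]
  field_simp

lemma heFun_eq_gau (l : ℕ) {c : ℝ} (hc : 0 ≤ c) :
    heFun l c =
      gau (Polynomial.C √c * (Polynomial.hermite l).map (Int.castRingHom ℝ)) := by
  funext x
  simp only [heFun, gau, hermiteFun_eq, Polynomial.eval_mul, Polynomial.eval_C, mul_pow,
    Real.sq_sqrt hc]

theorem steinG_second_derivative_uniform_bound (l : ℕ) (c : ℝ)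
    (hc : IsNormalizing l c)
    (a b : EReal) (hab : a < b)
    (ha : a = ⊥ ∨ ∃ a' : ℝ, a = (a' : EReal) ∧ heFun l c a' = 0)
    (hb : b = ⊤ ∨ ∃ b' : ℝ, b = (b' : EReal) ∧ heFun l c b' = 0)
    (S : Set ℝ) (hS : S = {t : ℝ | a < (t : EReal) ∧ (t : EReal) < b})
    (hpos : ∀ t ∈ S, 0 < heFun l c t) :
    ∃ C : ℝ, ∀ h : ℝ → ℝ, Differentiable ℝ h → LipschitzWith 1 h →
      ∀ t ∈ S, |deriv (deriv (steinG (heFun l c) S h)) t| ≤ C := by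
  have hq : Polynomial.C √c * (Polynomial.hermite l).map (Int.castRingHom ℝ) ≠ 0 :=
    mul_ne_zero (Polynomial.C_ne_zero.2 (Real.sqrt_pos.2 hc.1).ne')
      ((Polynomial.hermite_monic l).map _).ne_zero
  rw [heFun_eq_gau l hc.1.le] at hpos ⊢
  refine stein_bound _ hq a b (ha.imp_right fun ⟨a', h, _⟩ => ⟨a', h⟩)
    (hb.imp_right fun ⟨b', h, _⟩ => ⟨b', h⟩) S hS fun t ht h0 => ?_
  have := hpos t ht
  simp [gau, h0] at this
end
end

section
/- Let K ≥ 0 and, for each n ∈ ℕ and 0 ≤ k ≤ K, let P_{n,k} and P_k be probability distributions on ℝ and c_{n,k} > 0 weights with Σ_{k=0}^K c_{n,k} = 1. Assume μ < ∞ is such that ∫ |x| dP_k ≤ μ for every 0 ≤ k ≤ K. Suppose r(n) > 0 is such that d(P_{n,k}, P_k) ≤ r(n) for all k, and c_k ≥ 0 with Σ_{k=0}^K c_k = 1 satisfy |c_{n,k} − c_k| ≤ r(n) for all k. Define the mixtures M_n = Σ_{k=0}^K c_{n,k} P_{n,k} and M = Σ_{k=0}^K c_k P_k. Then d(M_n,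 M) ≤ (1 + (K+1)μ)·r(n). -/
/-!
For a 1-Lipschitz `h`, integrals against mixtures are weighted sums of integrals, and since both
families of weights have total mass `1`, the difference of the two expectations equals
`∑ k, (cn n k * (E_{Pn n k}[h] - E_{P k}[h]) + (cn n k - cl k) * (E_{P k}[h] - h 0))`.
The first terms contribute at most `r n`, being a convex combination of quantities bounded by `r n`.
In each of the `K + 1` second terms, the weight difference is at most `r n` and
`|E_{P k}[h] - h 0| ≤ E_{P k}|t| ≤ μ`, because `|h t - h 0| ≤ |t|`.
-/

open MeasureTheory Filter Set

noncomputable section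

/-- Holds because `h` stays within `|t|` of the constant `h 0`, and the first moment is finite. -/
lemma integrable_of_lipschitz_one {Q : Measure ℝ} [IsProbabilityMeasure Q]
    (hQ : Integrable (fun t : ℝ => t) Q) {h : ℝ → ℝ} (hh : LipschitzWith 1 h) :
    Integrable h Q := by
  have hdiff : Integrable (fun t => h t - h 0) Q := by
    refine hQ.mono (hh.continuous.sub continuous_const).aestronglyMeasurable ?_
    filter_upwards with t
    simpa [Real.dist_eq] using hh.dist_le_mul t 0
  exact (hdiff.add (integrable_const (h 0))).congr (by filter_upwards with t; simp)

lemma abs_integral_sub_le_moment {Q : Measure ℝ} [IsProbabilityMeasure Q]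
    (hQ : Integrable (fun t : ℝ => t) Q) {h : ℝ → ℝ} (hh : LipschitzWith 1 h) :
    |(∫ t, h t ∂Q) - h 0| ≤ ∫ t : ℝ, |t| ∂Q := by
  have hshift : (∫ t, h t ∂Q) - h 0 = ∫ t, (h t - h 0) ∂Q := by
    rw [integral_sub (integrable_of_lipschitz_one hQ hh) (integrable_const _)]
    simp
  rw [hshift]
  refine norm_integral_le_of_norm_le (f := fun t => h t - h 0) hQ.abs ?_
  filter_upwards with t
  simpa [Real.dist_eq] using hh.dist_le_mul t 0

lemma integral_mixture {K : ℕ} {Q : ℕ → Measure ℝ} {c : ℕ → ℝ} {h : ℝ → ℝ}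
    (hc : ∀ k ≤ K, 0 ≤ c k) (hint : ∀ k ≤ K, Integrable h (Q k)) :
    ∫ t, h t ∂(∑ k ∈ Finset.range (K + 1), ENNReal.ofReal (c k) • Q k)
      = ∑ k ∈ Finset.range (K + 1), c k * ∫ t, h t ∂(Q k) := by
  have hle : ∀ k ∈ Finset.range (K + 1), k ≤ K := fun k hk => by
    simpa [Nat.lt_succ_iff] using hk
  rw [integral_finsetSum_measure fun k hk =>
    (hint k (hle k hk)).smul_measure ENNReal.ofReal_ne_top]
  refine Finset.sum_congr rfl fun k hk => ?_
  rw [integral_smul_measure, ENNReal.toReal_ofReal (hc k (hle k hk)), smul_eq_mul]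

theorem wasserstein_mixture_bound (K : ℕ)
    (Pn : ℕ → ℕ → Measure ℝ) (P : ℕ → Measure ℝ)
    (hPn : ∀ n, ∀ k ≤ K, IsProbabilityMeasure (Pn n k))
    (hP : ∀ k ≤ K, IsProbabilityMeasure (P k))
    (hPnmom : ∀ n, ∀ k ≤ K, Integrable (fun t : ℝ => t) (Pn n k))
    (hPmom : ∀ k ≤ K, Integrable (fun t : ℝ => t) (P k))
    (cn : ℕ → ℕ → ℝ) (hcn : ∀ n, ∀ k ≤ K, 0 < cn n k)
    (hcsum : ∀ n, ∑ k ∈ Finset.range (K + 1), cn n k = 1)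
    (μ : ℝ) (hμ : ∀ k ≤ K, (∫ t : ℝ, |t| ∂(P k)) ≤ μ)
    (r : ℕ → ℝ) (hr : ∀ n, 0 < r n)
    (hd : ∀ n, ∀ k ≤ K, ∀ h : ℝ → ℝ, LipschitzWith 1 h →
      |(∫ t, h t ∂(Pn n k)) - ∫ t, h t ∂(P k)| ≤ r n)
    (cl : ℕ → ℝ) (hcl : ∀ k ≤ K, 0 ≤ cl k)
    (hclsum : ∑ k ∈ Finset.range (K + 1), cl k = 1)
    (hcc : ∀ n, ∀ k ≤ K, |cn n k - cl k| ≤ r n) :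
    ∀ n, ∀ h : ℝ → ℝ, LipschitzWith 1 h →
      |(∫ t, h t ∂(∑ k ∈ Finset.range (K + 1), ENNReal.ofReal (cn n k) • Pn n k))
          - ∫ t, h t ∂(∑ k ∈ Finset.range (K + 1), ENNReal.ofReal (cl k) • P k)|
        ≤ (1 + ((K : ℝ) + 1) * μ) * r n := by
  intro n h hh
  have hle : ∀ k ∈ Finset.range (K + 1), k ≤ K := fun k hk => by
    simpa [Nat.lt_succ_iff] using hk
  rw [integral_mixture (fun k hk => (hcn n k hk).le) fun k hk =>
      have := hPn n k hk
      integrable_of_lipschitz_one (hPnmom n k hk) hh,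
    integral_mixture hcl fun k hk =>
      have := hP k hk
      integrable_of_lipschitz_one (hPmom k hk) hh]
  -- Subtracting `h 0` in the second summand is free, as the weight differences sum to `0`.
  have hsplit : (∑ k ∈ Finset.range (K + 1), cn n k * ∫ t, h t ∂(Pn n k))
        - ∑ k ∈ Finset.range (K + 1), cl k * ∫ t, h t ∂(P k)
      = ∑ k ∈ Finset.range (K + 1),
          (cn n k * ((∫ t, h t ∂(Pn n k)) - ∫ t, h t ∂(P k))
            + (cn n k - cl k) * ((∫ t, h t ∂(P k)) - h 0)) := by
    have hzero : ∑ k ∈ Finset.range (K + 1), (cn n k - cl k) * h 0 = 0 := by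
      rw [← Finset.sum_mul, Finset.sum_sub_distrib, hcsum n, hclsum, sub_self, zero_mul]
    calc _ = (∑ k ∈ Finset.range (K + 1), cn n k * ∫ t, h t ∂(Pn n k))
          - ∑ k ∈ Finset.range (K + 1), cl k * ∫ t, h t ∂(P k)
          - ∑ k ∈ Finset.range (K + 1), (cn n k - cl k) * h 0 := by rw [hzero, sub_zero]
      _ = _ := by
        rw [← Finset.sum_sub_distrib, ← Finset.sum_sub_distrib]
        exact Finset.sum_congr rfl fun k _ => by ring
  rw [hsplit]
  calc |∑ k ∈ Finset.range (K + 1),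
          (cn n k * ((∫ t, h t ∂(Pn n k)) - ∫ t, h t ∂(P k))
            + (cn n k - cl k) * ((∫ t, h t ∂(P k)) - h 0))|
      ≤ ∑ k ∈ Finset.range (K + 1), (cn n k * r n + r n * μ) := by
        refine (Finset.abs_sum_le_sum_abs _ _).trans (Finset.sum_le_sum fun k hk => ?_)
        have hk' := hle k hk
        have := hP k hk'
        refine (abs_add_le _ _).trans (add_le_add ?_ ?_)
        · rw [abs_mul, abs_of_pos (hcn n k hk')]
          exact mul_le_mul_of_nonneg_left (hd n k hk' h hh) (hcn n k hk').le
        · rw [abs_mul]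
          exact mul_le_mul (hcc n k hk')
            ((abs_integral_sub_le_moment (hPmom k hk') hh).trans (hμ k hk'))
            (abs_nonneg _) (hr n).le
    _ = (1 + ((K : ℝ) + 1) * μ) * r n := by
        rw [Finset.sum_add_distrib, ← Finset.sum_mul, hcsum n, Finset.sum_const,
          Finset.card_range, nsmul_eq_mul]
        push_cast
        ring
end
end

section
/- Let f be the higher energy function of order ℓ ≥ 0. Then f is strictly log-concave away from its zeros: (log f)''(x) < 0 for every x ∈ ℝ with f(x) ≠ 0. In particular, f'(x)/f(x) = −x + 2p_ℓ'(x)/p_ℓ(x) is strictly decreasing on each open interval on which f is strictly positive. -/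
/-!
With `p = p_l`, one has `(log f)'' = -1 - 2 T_l / p ^ 2`, where `T_l = p' ^ 2 - p p''`, so it is
enough to know the Laguerre inequality `T_l ≥ 0`. This needs no information on the zeros of `p`.
The lowering identity `p_{l+1}' = (l+1) p_l` and the raising identity `p_{l+1} = x p_l - p_l'`
give the Hermite equation `p'' = x p' - l p`, and together they yield
`T_{l+1} = (l+1) (p_l ^ 2 + T_l)` with `T_0 = 0`; nonnegativity follows by induction
(`laguerre_hermite`). The rest is the computation of `f' / f` and its derivative
(`hasDerivAt_heFun`, `hasDerivAt_score`).
-/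

open MeasureTheory Filter Set

noncomputable section

open Polynomial in
theorem derivative_hermite_succ (n : ℕ) :
    derivative (hermite (n + 1)) = ((n : ℤ[X]) + 1) * hermite n := by
  induction n with
  | zero => simp
  | succ n ih =>
    have h : derivative (derivative (hermite (n + 1)))
        = ((n : ℤ[X]) + 1) * derivative (hermite n) := by
      rw [ih]; simp
    rw [hermite_succ (n + 1), derivative_sub, derivative_mul, derivative_X, h, ih]
    push_cast
    rw [hermite_succ n]
    ring

/-- The Hermite differential equation `p'' = x p' - n p`. -/
theorem derivative_derivative_hermite (n : ℕ) :
    Polynomial.derivative (Polynomial.derivative (Polynomial.hermite n))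
      = Polynomial.X * Polynomial.derivative (Polynomial.hermite n)
        - (n : Polynomial ℤ) * Polynomial.hermite n := by
  -- Differentiate `p_{n+1} = X p_n - p_n'` and compare with `p_{n+1}' = (n+1) p_n`.
  have h := derivative_hermite_succ n
  rw [Polynomial.hermite_succ, Polynomial.derivative_sub, Polynomial.derivative_mul,
    Polynomial.derivative_X] at h
  linear_combination -h

/-- The Laguerre inequality `p'' p ≤ p' ^ 2` for Hermite polynomials, by induction on the
degree: no real-rootedness is used. -/
theorem laguerre_hermite (n : ℕ) (x : ℝ) :
    Polynomial.aeval x (Polynomial.derivative (Polynomial.derivative (Polynomial.hermite n)))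
        * Polynomial.aeval x (Polynomial.hermite n)
      ≤ Polynomial.aeval x (Polynomial.derivative (Polynomial.hermite n)) ^ 2 := by
  induction n with
  | zero => simp
  | succ n ih =>
    rw [derivative_derivative_hermite, derivative_hermite_succ, Polynomial.hermite_succ]
    rw [derivative_derivative_hermite] at ih
    simp only [map_sub, map_mul, map_add, map_natCast, map_one, Polynomial.aeval_X] at ih ⊢
    push_cast
    generalize Polynomial.aeval x (Polynomial.hermite n) = p at ih ⊢
    generalize Polynomial.aeval x (Polynomial.derivative (Polynomial.hermite n)) = q at ih ⊢
    -- `T_{n+1} = (n+1) (p ^ 2 + T_n)`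
    have h : 0 ≤ ((n : ℝ) + 1) * (p ^ 2 + (q ^ 2 - (x * q - n * p) * p)) :=
      mul_nonneg (by positivity) (by nlinarith [sq_nonneg p])
    linarith

theorem hermiteFun_eq_aeval (l : ℕ) :
    hermiteFun l = fun x => Polynomial.aeval x (Polynomial.hermite l) := by
  funext x
  rw [Polynomial.hermite_eq_deriv_gaussian', hermiteFun, iteratedDeriv_eq_iterate]
  simp only [neg_div]
  ring

theorem hasDerivAt_hermiteFun (l : ℕ) (x : ℝ) :
    HasDerivAt (hermiteFun l)
      (Polynomial.aeval x (Polynomial.derivative (Polynomial.hermite l))) x := by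
  rw [hermiteFun_eq_aeval]
  exact Polynomial.hasDerivAt_aeval _ _

theorem deriv_hermiteFun (l : ℕ) :
    deriv (hermiteFun l)
      = fun x => Polynomial.aeval x (Polynomial.derivative (Polynomial.hermite l)) :=
  funext fun x => (hasDerivAt_hermiteFun l x).deriv

theorem hasDerivAt_heFun (l : ℕ) (c x : ℝ) :
    HasDerivAt (heFun l c)
      (c * (2 * hermiteFun l x * deriv (hermiteFun l) x - x * hermiteFun l x ^ 2)
        * Real.exp (-x ^ 2 / 2)) x := by
  have hp := (hasDerivAt_hermiteFun l x).differentiableAt.hasDerivAt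
  have he : HasDerivAt (fun t : ℝ => Real.exp (-t ^ 2 / 2)) (Real.exp (-x ^ 2 / 2) * -x) x := by
    have h : HasDerivAt (fun t : ℝ => -t ^ 2 / 2) (-x) x := by
      exact (((hasDerivAt_pow 2 x).neg).div_const 2).congr_deriv (by norm_num; ring)
    exact h.exp
  exact (((hp.pow 2).const_mul c).mul he).congr_deriv (by
    push_cast
    simp only [Pi.pow_apply]
    ring)

theorem hermiteFun_ne_zero {l : ℕ} {c x : ℝ} (h : heFun l c x ≠ 0) : hermiteFun l x ≠ 0 := by
  rintro h0
  simp [heFun, h0] at h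

theorem deriv_heFun_div {l : ℕ} {c x : ℝ} (h : heFun l c x ≠ 0) :
    deriv (heFun l c) x / heFun l c x
      = -x + 2 * deriv (hermiteFun l) x / hermiteFun l x := by
  have hp := hermiteFun_ne_zero h
  have hc : c ≠ 0 := by
    rintro rfl
    simp [heFun] at h
  rw [(hasDerivAt_heFun l c x).deriv, heFun]
  have := Real.exp_ne_zero (-x ^ 2 / 2)
  field_simp
  ring

/-- The derivative of the score function `-x + 2 p' / p` exists and is negative off the zeros
of `p`. -/
theorem hasDerivAt_score (l : ℕ) (x : ℝ) (hp : hermiteFun l x ≠ 0) :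
    ∃ d < 0, HasDerivAt (fun t => -t + 2 * deriv (hermiteFun l) t / hermiteFun l t) d x := by
  have h1 := hasDerivAt_hermiteFun l x
  have h2 : HasDerivAt (deriv (hermiteFun l)) (Polynomial.aeval x
      (Polynomial.derivative (Polynomial.derivative (Polynomial.hermite l)))) x := by
    rw [deriv_hermiteFun]
    exact Polynomial.hasDerivAt_aeval _ _
  refine ⟨_, ?_, (hasDerivAt_neg x).add ((h2.const_mul 2).div h1 hp)⟩
  have hL := laguerre_hermite l x
  have hd : deriv (hermiteFun l) x
      = Polynomial.aeval x (Polynomial.derivative (Polynomial.hermite l)) := h1.deriv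
  rw [← congrFun (hermiteFun_eq_aeval l) x, ← hd] at hL
  rw [← hd]
  have := div_nonpos_of_nonpos_of_nonneg (b := hermiteFun l x ^ 2)
    (a := 2 * Polynomial.aeval x
      (Polynomial.derivative (Polynomial.derivative (Polynomial.hermite l))) * hermiteFun l x
      - 2 * deriv (hermiteFun l) x * deriv (hermiteFun l) x) (by nlinarith) (sq_nonneg _)
  linarith

theorem higher_energy_log_concave (l : ℕ) (c : ℝ) (hc : IsNormalizing l c) :
    (∀ x : ℝ, heFun l c x ≠ 0 →
      deriv (deriv (fun t => Real.log (heFun l c t))) x < 0) ∧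
    (∀ x : ℝ, heFun l c x ≠ 0 →
      deriv (heFun l c) x / heFun l c x
        = -x + 2 * deriv (hermiteFun l) x / hermiteFun l x) ∧
    (∀ a b : ℝ, a < b → (∀ t ∈ Set.Icc a b, 0 < heFun l c t) →
      deriv (heFun l c) b / heFun l c b < deriv (heFun l c) a / heFun l c a) := by
  refine ⟨fun x hx => ?_, fun x hx => deriv_heFun_div hx, fun a b hab hpos => ?_⟩
  · obtain ⟨d, hd, hs⟩ := hasDerivAt_score l x (hermiteFun_ne_zero hx)
    -- `(log f)'` agrees with the score on a neighbourhood of `x`, where `f` does not vanish.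
    have hev : deriv (fun t => Real.log (heFun l c t)) =ᶠ[nhds x]
        fun t => -t + 2 * deriv (hermiteFun l) t / hermiteFun l t := by
      filter_upwards [(hasDerivAt_heFun l c x).continuousAt.eventually_ne hx] with t ht
      rw [((hasDerivAt_heFun l c t).differentiableAt.hasDerivAt.log ht).deriv, deriv_heFun_div ht]
    rw [hev.deriv_eq, hs.deriv]
    exact hd
  · have hS : ∀ t ∈ Set.Icc a b, ∃ d < 0, HasDerivAt
        (fun t => -t + 2 * deriv (hermiteFun l) t / hermiteFun l t) d t :=
      fun t ht => hasDerivAt_score l t (hermiteFun_ne_zero (hpos t ht).ne')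
    have hanti := strictAntiOn_of_deriv_neg (convex_Icc a b)
      (f := fun t => -t + 2 * deriv (hermiteFun l) t / hermiteFun l t)
      (fun t ht => by
        obtain ⟨d, _, h⟩ := hS t ht
        exact h.continuousAt.continuousWithinAt)
      (fun t ht => by
        obtain ⟨d, hd, h⟩ := hS t (interior_subset ht)
        rw [h.deriv]
        exact hd)
    have ha := Set.left_mem_Icc.2 hab.le
    have hb := Set.right_mem_Icc.2 hab.le
    rw [deriv_heFun_div (hpos a ha).ne', deriv_heFun_div (hpos b hb).ne']
    exact hanti ha hb hab
end
end
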